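/- Let α ∈ (1,2), γ > 0 and β ∈ [0,1]. Then there exists a constant C > 0, depending only on α, γ and β, such that for all λ > 0 and all t > 0: λ^β |E_{α,γ}(−λ t^α)| ≤ C t^{−αβ}. -/

import Mathlib

/-- The Mittag-Leffler function of real parameters `α, γ > 0` at a real argument:
`E_{α,γ}(x) = Σ_{k=0}^∞ x^k / Γ(αk + γ)`. -/
noncomputable def mittagLeffler (α γ x : ℝ) : ℝ :=
  ∑' k : ℕ, x ^ k / Real.Gamma (α * k + γ)

open MeasureTheory Set Filter Topology Complex

/-- The basic integrand in logarithmic coordinates. -/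
noncomputable def mlB (p : ℝ) (w : ℂ) : ℂ := exp (exp w + p * w)

/-- Hankel-type contour integral in logarithmic coordinates. -/
noncomputable def mlK (φ a : ℝ) (g : ℂ → ℂ) : ℂ :=
  (∫ u in Ioi a, g ((u : ℂ) + (φ : ℝ) * I)) - (∫ u in Ioi a, g ((u : ℂ) + ((-φ : ℝ) : ℂ) * I))
    + I * ∫ y in (-φ)..φ, g ((a : ℂ) + (y : ℂ) * I)

lemma mlB_norm (p u y : ℝ) :
    ‖mlB p ((u : ℂ) + (y : ℂ) * I)‖ = Real.exp (Real.exp u * Real.cos y + p * u) := by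
  simp [mlB, Complex.norm_exp, Complex.exp_re]

lemma mlB_diff (p : ℝ) : Differentiable ℂ (mlB p) := by
  unfold mlB; fun_prop

lemma mlB_cont (p : ℝ) : Continuous (mlB p) := (mlB_diff p).continuous

/-- double-exponential decay -/
lemma ml_tendsto (c p : ℝ) (hc : c < 0) :
    Tendsto (fun u : ℝ => Real.exp (Real.exp u * c + p * u)) atTop (𝓝 0) := by
  have h := (tendsto_rpow_mul_exp_neg_mul_atTop_nhds_zero p (-c) (by linarith)).comp
    Real.tendsto_exp_atTop
  refine h.congr fun u => ?_
  simp only [Function.comp]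
  rw [← Real.exp_mul, ← Real.exp_add]
  congr 1; ring

lemma ml_integrable (c p a : ℝ) (hc : c < 0) :
    IntegrableOn (fun u : ℝ => Real.exp (Real.exp u * c + p * u)) (Ioi a) := by
  refine integrable_of_isBigO_exp_neg (b := 1) one_pos (by fun_prop) ?_
  have h := (ml_tendsto c (p + 1) hc).isBigO_one ℝ
  have h2 := h.mul (Asymptotics.isBigO_refl (fun x : ℝ => Real.exp (-1 * x)) atTop)
  refine (h2.congr (fun u => ?_) (fun u => ?_))
  · rw [← Real.exp_add]; congr 1; ring
  · simp

lemma mlB_integrable (p a y : ℝ) (hc : Real.cos y < 0) :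
    IntegrableOn (fun u : ℝ => mlB p ((u : ℂ) + (y : ℂ) * I)) (Ioi a) := by
  refine (integrable_norm_iff ?_).1 ?_
  · exact ((mlB_cont p).comp (by fun_prop)).aestronglyMeasurable
  · simp only [mlB_norm]; exact ml_integrable _ _ _ hc

lemma mlK_shift (φ a b : ℝ) (hφ : 0 ≤ φ) (hab : a ≤ b) (g : ℂ → ℂ)
    (hg : ∀ w : ℂ, a ≤ w.re → |w.im| ≤ φ → DifferentiableAt ℂ g w)
    (h1 : IntegrableOn (fun u : ℝ => g ((u : ℂ) + (φ : ℝ) * I)) (Ioi a))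
    (h2 : IntegrableOn (fun u : ℝ => g ((u : ℂ) + ((-φ : ℝ) : ℂ) * I)) (Ioi a)) :
    mlK φ a g = mlK φ b g := by
  have H := integral_boundary_rect_eq_zero_of_differentiableOn g
    ((a : ℂ) + ((-φ : ℝ) : ℂ) * I) ((b : ℂ) + (φ : ℝ) * I) (by
      intro w hw
      rw [mem_reProdIm] at hw
      simp only [add_re, ofReal_re, mul_re, I_re, mul_zero, ofReal_im, I_im, mul_one, sub_self,
        add_zero, add_im, mul_im, zero_add] at hw
      rw [uIcc_of_le hab, uIcc_of_le (by linarith)] at hw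
      exact (hg w hw.1.1 (abs_le.2 hw.2)).differentiableWithinAt)
  simp only [add_re, ofReal_re, mul_re, I_re, mul_zero, ofReal_im, I_im, mul_one, sub_self,
        add_zero, add_im, mul_im, zero_add, smul_eq_mul] at H
  have e1 := intervalIntegral.integral_Ioi_sub_Ioi h1 hab
  have e2 := intervalIntegral.integral_Ioi_sub_Ioi h2 hab
  unfold mlK
  rw [← e1, ← e2] at H
  linear_combination -H

/-- change of the height of the horizontal line -/
lemma mlB_vshift (p c y₁ y₂ : ℝ) (hc : c < 0) (hy : y₁ ≤ y₂)
    (hcos : ∀ y ∈ Icc y₁ y₂, Real.cos y ≤ c) :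
    (∫ u in Ioi (0 : ℝ), mlB p ((u : ℂ) + (y₁ : ℂ) * I))
      - (∫ u in Ioi (0 : ℝ), mlB p ((u : ℂ) + (y₂ : ℂ) * I))
      - I * (∫ y in y₁..y₂, mlB p (((0 : ℝ) : ℂ) + (y : ℂ) * I)) = 0 := by
  have H : ∀ R : ℝ, _ := fun R => integral_boundary_rect_eq_zero_of_differentiableOn (mlB p)
    (((0 : ℝ) : ℂ) + (y₁ : ℂ) * I) ((R : ℂ) + (y₂ : ℂ) * I) (mlB_diff p).differentiableOn
  simp only [add_re, ofReal_re, mul_re, I_re, mul_zero, ofReal_im, I_im, mul_one, sub_self,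
        add_zero, add_im, mul_im, zero_add, smul_eq_mul] at H
  have t1 := intervalIntegral_tendsto_integral_Ioi 0 (mlB_integrable p 0 y₁
    ((hcos y₁ (left_mem_Icc.2 hy)).trans_lt hc)) tendsto_id
  have t2 := intervalIntegral_tendsto_integral_Ioi 0 (mlB_integrable p 0 y₂
    ((hcos y₂ (right_mem_Icc.2 hy)).trans_lt hc)) tendsto_id
  have t3 : Tendsto (fun R : ℝ => ∫ y in y₁..y₂, mlB p ((R : ℂ) + (y : ℂ) * I)) atTop (𝓝 0) := by
    have hb : ∀ R : ℝ, ‖∫ y in y₁..y₂, mlB p ((R : ℂ) + (y : ℂ) * I)‖ ≤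
        Real.exp (Real.exp R * c + p * R) * |y₂ - y₁| := by
      intro R
      refine intervalIntegral.norm_integral_le_of_norm_le_const fun y hy' => ?_
      rw [uIoc_of_le hy] at hy'
      rw [mlB_norm]
      have := hcos y (Ioc_subset_Icc_self hy')
      gcongr
    refine squeeze_zero_norm hb ?_
    simpa using (ml_tendsto c p hc).mul_const |y₂ - y₁|
  have t := ((t1.sub t2).add (t3.const_mul I)).sub_const
    (I * ∫ y in y₁..y₂, mlB p (((0 : ℝ) : ℂ) + (y : ℂ) * I))
  have := tendsto_nhds_unique (t.congr fun R => H R) tendsto_const_nhds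
  simpa using this

lemma mlK_angle (p φ : ℝ) (h1 : Real.pi / 2 < φ) (h2 : φ ≤ Real.pi) :
    mlK φ 0 (mlB p) = mlK Real.pi 0 (mlB p) := by
  have hc : Real.cos φ < 0 := Real.cos_neg_of_pi_div_two_lt_of_lt h1 (by linarith [Real.pi_pos])
  have hπ := Real.pi_pos
  have A := mlB_vshift p (Real.cos φ) φ Real.pi hc h2 (fun y hy =>
    Real.cos_le_cos_of_nonneg_of_le_pi (by linarith) hy.2 hy.1)
  have B := mlB_vshift p (Real.cos φ) (-Real.pi) (-φ) hc (by linarith) (fun y hy => by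
    rw [← Real.cos_neg y]
    exact Real.cos_le_cos_of_nonneg_of_le_pi (by linarith) (by linarith [hy.1])
      (by linarith [hy.2]))
  have ii : ∀ a b : ℝ, IntervalIntegrable (fun y : ℝ => mlB p (((0 : ℝ) : ℂ) + (y : ℂ) * I))
      volume a b := fun a b => ((mlB_cont p).comp (by fun_prop)).intervalIntegrable a b
  have e1 := intervalIntegral.integral_add_adjacent_intervals (ii (-Real.pi) (-φ)) (ii (-φ) φ)
  have e2 := intervalIntegral.integral_add_adjacent_intervals (ii (-Real.pi) φ) (ii φ Real.pi)
  unfold mlK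
  rw [← e2, ← e1]
  linear_combination A + B

lemma mlB_pi (p u : ℝ) : mlB p ((u : ℂ) + (Real.pi : ℝ) * I)
    = exp (p * Real.pi * I) * (Real.exp (-Real.exp u + p * u) : ℝ) := by
  unfold mlB
  rw [Complex.exp_add (u : ℂ), exp_pi_mul_I]
  push_cast
  rw [← Complex.exp_add]; congr 1; ring

lemma mlB_neg_pi (p u : ℝ) : mlB p ((u : ℂ) + ((-Real.pi : ℝ) : ℂ) * I)
    = exp (-(p * Real.pi * I)) * (Real.exp (-Real.exp u + p * u) : ℝ) := by
  unfold mlB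
  have : exp (((-Real.pi : ℝ) : ℂ) * I) = -1 := by
    push_cast; rw [neg_mul, Complex.exp_neg, exp_pi_mul_I]; norm_num
  rw [Complex.exp_add (u : ℂ), this]
  push_cast
  rw [← Complex.exp_add]; congr 1; ring

lemma mlK_pi (p a : ℝ) : mlK Real.pi a (mlB p) =
    2 * I * Real.sin (p * Real.pi) * ((∫ u in Ioi a, Real.exp (-Real.exp u + p * u) : ℝ) : ℂ)
    + I * ∫ y in (-Real.pi)..Real.pi, mlB p ((a : ℂ) + (y : ℂ) * I) := by
  unfold mlK
  simp only [mlB_pi, mlB_neg_pi]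
  have eI : (∫ u in Ioi a, ((Real.exp (-Real.exp u + p * u) : ℝ) : ℂ)) =
      ((∫ u in Ioi a, Real.exp (-Real.exp u + p * u) : ℝ) : ℂ) := integral_ofReal
  rw [integral_const_mul, integral_const_mul, eI]
  have : (Real.sin (p * Real.pi) : ℂ) = (exp (-(p * Real.pi * I)) - exp (p * Real.pi * I)) * I / 2 := by
    push_cast; rw [Complex.sin]; ring_nf
  rw [this]
  linear_combination ((exp (p * Real.pi * I) - exp (-(p * Real.pi * I))) *
     ((∫ u in Ioi a, Real.exp (-Real.exp u + p * u) : ℝ) : ℂ)) * (I_sq)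

lemma ml_edge (p : ℝ) (hp : 0 ≤ p) (L : ℂ)
    (hL : ∀ y : ℝ, Tendsto (fun a : ℝ => mlB p ((a : ℂ) + (y : ℂ) * I)) atBot (𝓝 L)) :
    Tendsto (fun a : ℝ => ∫ y in (-Real.pi)..Real.pi, mlB p ((a : ℂ) + (y : ℂ) * I)) atBot
      (𝓝 (2 * Real.pi * L)) := by
  have : (∫ y in (-Real.pi)..Real.pi, L) = 2 * Real.pi * L := by
    rw [intervalIntegral.integral_const, real_smul]; push_cast; ring
  rw [← this]
  refine intervalIntegral.tendsto_integral_filter_of_dominated_convergence (fun _ => Real.exp 1)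
    ?_ ?_ ?_ ?_
  · exact Eventually.of_forall fun a => ((mlB_cont p).comp (by fun_prop)).aestronglyMeasurable
  · filter_upwards [eventually_le_atBot 0] with a ha
    refine Eventually.of_forall fun y _ => ?_
    rw [mlB_norm]
    have h1 : Real.exp a ≤ 1 := Real.exp_le_one_iff.2 ha
    have h2 : Real.exp a * Real.cos y ≤ 1 * 1 := by
      nlinarith [Real.cos_le_one y, Real.exp_pos a]
    have h3 : p * a ≤ 0 := mul_nonpos_of_nonneg_of_nonpos hp ha
    gcongr; linarith
  · exact intervalIntegrable_const
  · exact Eventually.of_forall fun y _ => hL y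

lemma mlB_lim_zero (y : ℝ) : 
    Tendsto (fun a : ℝ => mlB 0 ((a : ℂ) + (y : ℂ) * I)) atBot (𝓝 1) := by
  have h : Tendsto (fun a : ℝ => exp ((a : ℂ) + (y : ℂ) * I)) atBot (𝓝 0) := by
    rw [tendsto_zero_iff_norm_tendsto_zero]
    simpa [Complex.norm_exp] using Real.tendsto_exp_atBot
  have := (Complex.continuous_exp.tendsto 0).comp h
  simpa [mlB, Function.comp_def] using this

lemma mlB_lim_pos (p : ℝ) (hp : 0 < p) (y : ℝ) : 
    Tendsto (fun a : ℝ => mlB p ((a : ℂ) + (y : ℂ) * I)) atBot (𝓝 0) := by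
  rw [tendsto_zero_iff_norm_tendsto_zero]
  simp only [mlB_norm]
  refine Real.tendsto_exp_atBot.comp ?_
  have h1 : Tendsto (fun a : ℝ => Real.exp a * Real.cos y) atBot (𝓝 (0 * Real.cos y)) :=
    Real.tendsto_exp_atBot.mul_const _
  exact h1.add_atBot (tendsto_id.const_mul_atBot hp)

lemma ml_gamma (p : ℝ) (hp : 0 < p) :
    Integrable (fun u : ℝ => Real.exp (-Real.exp u + p * u)) ∧
    ∫ u : ℝ, Real.exp (-Real.exp u + p * u) = Real.Gamma p := by
  have him : Real.exp '' univ = Ioi 0 := by rw [image_univ, Real.range_exp]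
  have hd : ∀ x ∈ (univ : Set ℝ), HasDerivWithinAt Real.exp (Real.exp x) univ x :=
    fun x _ => (Real.hasDerivAt_exp x).hasDerivWithinAt
  have key : ∀ x : ℝ, |Real.exp x| • (Real.exp (-Real.exp x) * Real.exp x ^ (p - 1))
      = Real.exp (-Real.exp x + p * x) := by
    intro x
    rw [abs_of_pos (Real.exp_pos x), smul_eq_mul, ← Real.exp_mul, ← Real.exp_add, ← Real.exp_add]
    congr 1; ring
  constructor
  · have := (integrableOn_image_iff_integrableOn_abs_deriv_smul MeasurableSet.univ hd
      Real.exp_injective.injOn (fun x => Real.exp (-x) * x ^ (p - 1))).1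
      (by rw [him]; exact Real.GammaIntegral_convergent hp)
    simpa only [key, integrableOn_univ] using this
  · rw [Real.Gamma_eq_integral hp, ← him, integral_image_eq_integral_abs_deriv_smul
      MeasurableSet.univ hd Real.exp_injective.injOn]
    simp only [key, Measure.restrict_univ]

lemma mlK_pi_const (p a : ℝ) (ha : a ≤ 0) : mlK Real.pi a (mlB p) = mlK Real.pi 0 (mlB p) :=
  mlK_shift _ _ _ Real.pi_pos.le ha _ (fun w _ _ => mlB_diff p w)
    (mlB_integrable _ _ _ (by simp)) (mlB_integrable _ _ _ (by simp))

lemma mlK_pi_zero : mlK Real.pi 0 (mlB 0) = 2 * Real.pi * I := by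
  have h := (ml_edge 0 le_rfl 1 mlB_lim_zero).const_mul I
  have h2 : Tendsto (fun a : ℝ => mlK Real.pi a (mlB 0)) atBot (𝓝 (I * (2 * Real.pi * 1))) := by
    refine h.congr fun a => ?_
    rw [mlK_pi]; simp
  have h3 : Tendsto (fun a : ℝ => mlK Real.pi a (mlB 0)) atBot (𝓝 (mlK Real.pi 0 (mlB 0))) := by
    refine tendsto_const_nhds.congr' ?_
    filter_upwards [eventually_le_atBot 0] with a ha using (mlK_pi_const 0 a ha).symm
  rw [tendsto_nhds_unique h3 h2]; ring

lemma mlK_pi_pos (p : ℝ) (hp : 0 < p) :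
    mlK Real.pi 0 (mlB p) = 2 * I * Real.sin (p * Real.pi) * Real.Gamma p := by
  have h := (ml_edge p hp.le 0 (mlB_lim_pos p hp)).const_mul I
  obtain ⟨g1, g2⟩ := ml_gamma p hp
  have h1 : Tendsto (fun a : ℝ => ∫ u in Ioi a, Real.exp (-Real.exp u + p * u)) atBot
      (𝓝 (Real.Gamma p)) := by
    rw [← g2]
    exact (aecover_Ioi tendsto_id).integral_tendsto_of_countably_generated g1
  have h1' := ((Complex.continuous_ofReal.tendsto _).comp h1).const_mul
    (2 * I * Real.sin (p * Real.pi))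
  have h2 := (h1'.add h).congr (fun a => (mlK_pi p a).symm)
  have h3 : Tendsto (fun a : ℝ => mlK Real.pi a (mlB p)) atBot (𝓝 (mlK Real.pi 0 (mlB p))) := by
    refine tendsto_const_nhds.congr' ?_
    filter_upwards [eventually_le_atBot 0] with a ha using (mlK_pi_const p a ha).symm
  rw [tendsto_nhds_unique h3 h2]; simp

lemma mlB_hasDeriv (z : ℝ) (w : ℂ) :
    HasDerivAt (mlB (-z)) (mlB (1 - z) w - z * mlB (-z) w) w := by
  have h : HasDerivAt (fun w : ℂ => exp w + ((-z : ℝ) : ℂ) * w) (exp w + ((-z : ℝ) : ℂ) * 1) w :=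
    (Complex.hasDerivAt_exp w).add ((hasDerivAt_id w).const_mul _)
  have h2 := h.cexp
  refine h2.congr_deriv ?_
  have : mlB (1 - z) w = exp w * mlB (-z) w := by
    unfold mlB; rw [← Complex.exp_add]; congr 1; push_cast; ring
  rw [this]; unfold mlB; push_cast; ring

lemma mlB_horiz (z y : ℝ) (hy : Real.cos y < 0) :
    (∫ u in Ioi (0 : ℝ), mlB (1 - z) ((u : ℂ) + (y : ℂ) * I))
      - z * (∫ u in Ioi (0 : ℝ), mlB (-z) ((u : ℂ) + (y : ℂ) * I))
    = - mlB (-z) (((0 : ℝ) : ℂ) + (y : ℂ) * I) := by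
  rw [← integral_const_mul, ← integral_sub (mlB_integrable _ _ _ hy)
    ((mlB_integrable _ _ _ hy).const_mul _)]
  have ht : Tendsto (fun u : ℝ => mlB (-z) ((u : ℂ) + (y : ℂ) * I)) atTop (𝓝 0) := by
    rw [tendsto_zero_iff_norm_tendsto_zero]
    simp only [mlB_norm]
    exact ml_tendsto _ _ hy
  have := integral_Ioi_of_hasDerivAt_of_tendsto' (a := 0) (m := 0)
    (f := fun u : ℝ => mlB (-z) ((u : ℂ) + (y : ℂ) * I))
    (f' := fun u : ℝ => mlB (1 - z) ((u : ℂ) + (y : ℂ) * I)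
      - z * mlB (-z) ((u : ℂ) + (y : ℂ) * I)) (fun u _ => by
        have h1 : HasDerivAt (fun u : ℝ => (u : ℂ) + (y : ℂ) * I) 1 u :=
          (Complex.ofRealCLM.hasDerivAt (x := u)).add_const _
        have h2 := HasDerivAt.comp (h₂ := mlB (-z)) u (mlB_hasDeriv z ((u : ℂ) + (y : ℂ) * I)) h1
        rw [mul_one] at h2
        exact h2)
    ((mlB_integrable _ _ _ hy).sub ((mlB_integrable _ _ _ hy).const_mul _)) ht
  rw [this]; simp

lemma mlK_rec (z : ℝ) : mlK Real.pi 0 (mlB (1 - z)) = z * mlK Real.pi 0 (mlB (-z)) := by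
  have h1 := mlB_horiz z Real.pi (by simp)
  have h2 := mlB_horiz z (-Real.pi) (by simp)
  have ii : ∀ p : ℝ, IntervalIntegrable (fun y : ℝ => mlB p (((0 : ℝ) : ℂ) + (y : ℂ) * I))
      volume (-Real.pi) Real.pi := fun p => ((mlB_cont p).comp (by fun_prop)).intervalIntegrable _ _
  have h3 : (∫ y in (-Real.pi)..Real.pi, (mlB (1 - z) (((0 : ℝ) : ℂ) + (y : ℂ) * I)
      - z * mlB (-z) (((0 : ℝ) : ℂ) + (y : ℂ) * I)) * I) = _ :=
    intervalIntegral.integral_eq_sub_of_hasDerivAt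
    (f := fun y : ℝ => mlB (-z) (((0 : ℝ) : ℂ) + (y : ℂ) * I)) (fun y _ => by
        have h1 : HasDerivAt (fun u : ℝ => ((0 : ℝ) : ℂ) + (u : ℂ) * I) I y := by
          simpa using ((Complex.ofRealCLM.hasDerivAt (x := y)).mul_const I).const_add ((0 : ℝ) : ℂ)
        exact HasDerivAt.comp (h₂ := mlB (-z)) y
          (mlB_hasDeriv z (((0 : ℝ) : ℂ) + (y : ℂ) * I)) h1)
    (((ii _).sub ((ii _).const_mul _)).mul_const _)
  rw [intervalIntegral.integral_mul_const, intervalIntegral.integral_sub (ii _)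
    ((ii _).const_mul _), intervalIntegral.integral_const_mul] at h3
  unfold mlK
  linear_combination h1 - h2 + h3

lemma ml_hankel_pi (n : ℕ) : ∀ z : ℝ, 0 < z → z ≤ n + 1 →
    mlK Real.pi 0 (mlB (1 - z)) = 2 * Real.pi * I / Real.Gamma z := by
  induction n with
  | zero =>
    intro z hz hz1
    rcases eq_or_lt_of_le hz1 with h | h
    · have : z = 1 := by simpa using h
      subst this
      simpa using mlK_pi_zero
    · have h : z < 1 := by simpa using h
      rw [mlK_pi_pos _ (by linarith)]
      have hr := Real.Gamma_mul_Gamma_one_sub z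
      have hs : 0 < Real.sin (Real.pi * z) := Real.sin_pos_of_pos_of_lt_pi
        (mul_pos Real.pi_pos hz) (by nlinarith [Real.pi_pos])
      have hG := Real.Gamma_pos_of_pos hz
      have e : Real.sin ((1 - z) * Real.pi) = Real.sin (Real.pi * z) := by
        rw [← Real.sin_pi_sub]; congr 1; ring
      rw [e]
      have : Real.sin (Real.pi * z) * Real.Gamma (1 - z) = Real.pi / Real.Gamma z := by
        rw [eq_div_iff hs.ne'] at hr
        rw [eq_div_iff hG.ne']; linarith
      have h' : (Real.sin (Real.pi * z) : ℂ) * Real.Gamma (1 - z) = Real.pi / Real.Gamma z := by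
        exact_mod_cast this
      rw [mul_assoc, h']; ring
  | succ n ih =>
    intro z hz hz1
    by_cases hzn : z ≤ n + 1
    · exact ih z hz hzn
    push Not at hzn
    have hz' : 0 < z - 1 := by
      have : (0 : ℝ) ≤ n := n.cast_nonneg
      linarith
    have h := ih (z - 1) hz' (by push_cast at hz1; linarith)
    have hr := mlK_rec (z - 1)
    rw [h, show -(z - 1) = 1 - z by ring] at hr
    have hG : Real.Gamma z = (z - 1) * Real.Gamma (z - 1) := by
      have := Real.Gamma_add_one hz'.ne'
      rwa [sub_add_cancel] at this
    have hc : ((z - 1 : ℝ) : ℂ) ≠ 0 := by exact_mod_cast hz'.ne'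
    have hc2 : ((Real.Gamma (z - 1) : ℝ) : ℂ) ≠ 0 := by
      exact_mod_cast (Real.Gamma_pos_of_pos hz').ne'
    rw [hG, ofReal_mul]
    field_simp at hr ⊢
    linear_combination -hr

/-- The Hankel formula for `1/Γ` in logarithmic coordinates. -/
lemma ml_hankel (φ a z : ℝ) (h1 : Real.pi / 2 < φ) (h2 : φ ≤ Real.pi) (ha : 0 ≤ a) (hz : 0 < z) :
    mlK φ a (mlB (1 - z)) = 2 * Real.pi * I / Real.Gamma z := by
  have hπ := Real.pi_pos
  have hc : Real.cos φ < 0 := Real.cos_neg_of_pi_div_two_lt_of_lt h1 (by linarith)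
  obtain ⟨n, hn⟩ := exists_nat_ge z
  rw [← ml_hankel_pi n z hz (by linarith), ← mlK_angle _ φ h1 h2]
  exact (mlK_shift _ _ _ (by linarith) ha _ (fun w _ _ => mlB_diff _ w)
    (mlB_integrable _ _ _ hc) (mlB_integrable _ _ _ (by rwa [Real.cos_neg]))).symm

lemma ml_den (α φ x : ℝ) (hα : 0 < α) (hφ : α * φ < Real.pi) (hx : 0 < x) (w : ℂ)
    (hw : |w.im| ≤ φ) :
    Real.sqrt ((1 + Real.cos (α * φ)) / 2) * (1 + x * Real.exp (-(α * w.re))) ≤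
      ‖1 + x * exp (-(α * w))‖ := by
  set q := x * Real.exp (-(α * w.re)) with hq
  have hq0 : 0 < q := by positivity
  have hre : (1 + x * exp (-(α * w))).re = 1 + q * Real.cos (α * w.im) := by
    simp [Complex.exp_re, hq]; ring
  have him : (1 + x * exp (-(α * w))).im = -(q * Real.sin (α * w.im)) := by
    simp [Complex.exp_im, hq]; ring
  have hcos : Real.cos (α * φ) ≤ Real.cos (α * w.im) := by
    rw [← Real.cos_abs (α * w.im)]
    refine Real.cos_le_cos_of_nonneg_of_le_pi (abs_nonneg _) hφ.le ?_
    rw [abs_mul, abs_of_pos hα]; gcongr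
  rw [Complex.norm_eq_sqrt_sq_add_sq, hre, him]
  refine Real.le_sqrt_of_sq_le ?_
  have h1 := Real.neg_one_le_cos (α * φ)
  have h2 := Real.cos_le_one (α * φ)
  rw [mul_pow, Real.sq_sqrt (by linarith)]
  nlinarith [Real.sin_sq_add_cos_sq (α * w.im), mul_nonneg (sub_nonneg.2 h2) (sq_nonneg (1 - q)),
    mul_nonneg hq0.le (sub_nonneg.2 hcos)]

lemma ml_d_pos (α φ : ℝ) (h0 : 0 ≤ α * φ) (hφ : α * φ < Real.pi) :
    0 < Real.sqrt ((1 + Real.cos (α * φ)) / 2) := by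
  have : Real.cos Real.pi < Real.cos (α * φ) :=
    Real.cos_lt_cos_of_nonneg_of_le_pi h0 le_rfl hφ
  rw [Real.cos_pi] at this
  apply Real.sqrt_pos.2; linarith

/-- The integrand of the contour representation of the Mittag-Leffler function. -/
noncomputable def mlG (α γ x : ℝ) (w : ℂ) : ℂ := mlB (1 - γ) w * (1 + x * exp (-(α * w)))⁻¹

lemma mlG_norm (α φ γ x : ℝ) (hα : 0 < α) (h0 : 0 ≤ φ) (hφ : α * φ < Real.pi) (hx : 0 < x) (u y : ℝ)
    (hu : 0 ≤ u) (hy : |y| ≤ φ) :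
    ‖mlG α γ x ((u : ℂ) + (y : ℂ) * I)‖ ≤
      (Real.sqrt ((1 + Real.cos (α * φ)) / 2))⁻¹ * (1 + x)⁻¹ *
        Real.exp (Real.exp u * Real.cos y + (1 - γ + α) * u) := by
  have hd := ml_d_pos α φ (by positivity) hφ
  have h := ml_den α φ x hα hφ hx ((u : ℂ) + (y : ℂ) * I) (by simpa using hy)
  set d := Real.sqrt ((1 + Real.cos (α * φ)) / 2)
  have hre : ((u : ℂ) + (y : ℂ) * I).re = u := by simp
  rw [hre] at h
  have hE : 1 ≤ Real.exp (α * u) := Real.one_le_exp (by positivity)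
  have hEE : Real.exp (α * u) * Real.exp (-(α * u)) = 1 := by
    rw [← Real.exp_add]; simp
  have h3 : d * (1 + x) * Real.exp (-(α * u)) ≤
      ‖1 + x * exp (-(α * ((u : ℂ) + (y : ℂ) * I)))‖ := by
    refine le_trans ?_ h
    have : Real.exp (-(α * u)) ≤ 1 := Real.exp_le_one_iff.2 (by nlinarith)
    rw [mul_assoc]
    gcongr
    nlinarith
  unfold mlG
  rw [norm_mul, norm_inv, mlB_norm]
  have h4 : ‖1 + x * exp (-(α * ((u : ℂ) + (y : ℂ) * I)))‖⁻¹ ≤ (d * (1 + x) * Real.exp (-(α * u)))⁻¹ := by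
    gcongr
  calc _ ≤ Real.exp (Real.exp u * Real.cos y + (1 - γ) * u) * (d * (1 + x) * Real.exp (-(α * u)))⁻¹ := by
        gcongr
    _ = _ := by
        rw [mul_inv, mul_inv, ← Real.exp_neg, neg_neg, 
          show Real.exp u * Real.cos y + (1 - γ + α) * u = 
            (Real.exp u * Real.cos y + (1 - γ) * u) + α * u by ring, Real.exp_add _ (α * u)]
        ring

lemma mlG_diff (α φ γ x : ℝ) (hα : 0 < α) (h0 : 0 ≤ φ) (hφ : α * φ < Real.pi) (hx : 0 < x) (w : ℂ)
    (hw : |w.im| ≤ φ) : DifferentiableAt ℂ (mlG α γ x) w := by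
  have hd := ml_d_pos α φ (by positivity) hφ
  have h := ml_den α φ x hα hφ hx w hw
  have hne : 1 + x * exp (-(α * w)) ≠ 0 := by
    intro h'
    rw [h', norm_zero] at h
    have : 0 < Real.sqrt ((1 + Real.cos (α * φ)) / 2) * (1 + x * Real.exp (-(α * w.re))) := by
      positivity
    linarith
  unfold mlG
  refine (mlB_diff _ w).mul (DifferentiableAt.inv (by fun_prop) hne)

lemma mlG_cont (α φ γ x : ℝ) (hα : 0 < α) (h0 : 0 ≤ φ) (hφ : α * φ < Real.pi) (hx : 0 < x) (y : ℝ)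
    (hy : |y| ≤ φ) : Continuous (fun u : ℝ => mlG α γ x ((u : ℂ) + (y : ℂ) * I)) := by
  rw [continuous_iff_continuousAt]
  intro u
  exact ContinuousAt.comp (g := mlG α γ x)
    (mlG_diff α φ γ x hα h0 hφ hx _ (by simpa using hy)).continuousAt (by fun_prop)

lemma mlG_integrable (α φ γ x : ℝ) (hα : 0 < α) (h0 : 0 ≤ φ) (hφ : α * φ < Real.pi) (hx : 0 < x)
    (y : ℝ) (hy : |y| ≤ φ) (hc : Real.cos y < 0) :
    IntegrableOn (fun u : ℝ => mlG α γ x ((u : ℂ) + (y : ℂ) * I)) (Ioi 0) := by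
  refine Integrable.mono' ((ml_integrable _ (1 - γ + α) 0 hc).const_mul
    ((Real.sqrt ((1 + Real.cos (α * φ)) / 2))⁻¹ * (1 + x)⁻¹))
    (mlG_cont α φ γ x hα h0 hφ hx y hy).aestronglyMeasurable ?_
  refine (ae_restrict_iff' measurableSet_Ioi).2 (Eventually.of_forall fun u hu => ?_)
  exact mlG_norm α φ γ x hα h0 hφ hx u y (le_of_lt hu) hy

/-- uniform bound for the contour integral -/
lemma mlK_bound (α φ γ : ℝ) (hα : 0 < α) (h1 : Real.pi / 2 < φ) (h2 : φ ≤ Real.pi)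
    (hφ : α * φ < Real.pi) :
    ∃ C > 0, ∀ x : ℝ, 0 < x → ‖mlK φ 0 (mlG α γ x)‖ ≤ C * (1 + x)⁻¹ := by
  have hπ := Real.pi_pos
  have h0 : 0 ≤ φ := by linarith
  have hc : Real.cos φ < 0 := Real.cos_neg_of_pi_div_two_lt_of_lt h1 (by linarith)
  have hd := ml_d_pos α φ (by positivity) hφ
  set d := Real.sqrt ((1 + Real.cos (α * φ)) / 2) with hdd
  set J := ∫ u in Ioi (0 : ℝ), Real.exp (Real.exp u * Real.cos φ + (1 - γ + α) * u) with hJ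
  have hJ0 : 0 ≤ J := integral_nonneg fun u => (Real.exp_pos _).le
  refine ⟨d⁻¹ * (J + J + Real.exp 1 * (2 * φ)), ?_, ?_⟩
  · have : 0 < Real.exp 1 * (2 * φ) := mul_pos (Real.exp_pos _) (by linarith)
    have : 0 < J + J + Real.exp 1 * (2 * φ) := by linarith
    positivity
  intro x hx
  have hor : ∀ y : ℝ, |y| ≤ φ → Real.cos y = Real.cos φ →
      ‖∫ u in Ioi (0 : ℝ), mlG α γ x ((u : ℂ) + (y : ℂ) * I)‖ ≤ d⁻¹ * (1 + x)⁻¹ * J := by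
    intro y hy hcy
    rw [hJ, ← integral_const_mul]
    refine norm_integral_le_of_norm_le ((ml_integrable _ (1 - γ + α) 0 hc).const_mul _) ?_
    refine (ae_restrict_iff' measurableSet_Ioi).2 (Eventually.of_forall fun u hu => ?_)
    rw [← hcy]
    exact mlG_norm α φ γ x hα h0 hφ hx u y (le_of_lt hu) hy
  have b1 := hor φ (by rw [abs_of_nonneg h0]) rfl
  have b2 := hor (-φ) (by rw [abs_neg, abs_of_nonneg h0]) (Real.cos_neg _)
  have b3 : ‖∫ y in (-φ)..φ, mlG α γ x (((0 : ℝ) : ℂ) + (y : ℂ) * I)‖ ≤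
      d⁻¹ * (1 + x)⁻¹ * Real.exp 1 * |φ - -φ| := by
    refine intervalIntegral.norm_integral_le_of_norm_le_const fun y hy => ?_
    rw [uIoc_of_le (by linarith)] at hy
    refine (mlG_norm α φ γ x hα h0 hφ hx 0 y le_rfl (abs_le.2 ⟨hy.1.le, hy.2⟩)).trans ?_
    have := Real.cos_le_one y
    gcongr
    simpa using this
  rw [show φ - -φ = 2 * φ by ring, abs_of_nonneg (by linarith)] at b3
  unfold mlK
  refine (norm_add_le _ _).trans ?_
  rw [norm_mul, norm_I, one_mul]
  have := norm_sub_le (∫ u in Ioi (0 : ℝ), mlG α γ x ((u : ℂ) + (φ : ℂ) * I))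
    (∫ u in Ioi (0 : ℝ), mlG α γ x ((u : ℂ) + ((-φ : ℝ) : ℂ) * I))
  nlinarith

lemma ml_hasSum (α φ γ x a : ℝ) (hα : 0 < α) (h1 : Real.pi / 2 < φ) (h2 : φ ≤ Real.pi)
    (hx : 0 < x) (ha : x * Real.exp (-(α * a)) ≤ 1 / 2) :
    HasSum (fun k : ℕ => (-x : ℂ) ^ k * mlK φ a (mlB (1 - (α * k + γ)))) (mlK φ a (mlG α γ x)) := by
  have hπ := Real.pi_pos
  have hc : Real.cos φ < 0 := Real.cos_neg_of_pi_div_two_lt_of_lt h1 (by linarith)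
  have key : ∀ (k : ℕ) (w : ℂ), (-x : ℂ) ^ k * mlB (1 - (α * k + γ)) w =
      mlB (1 - γ) w * (-(x * exp (-(α * w)))) ^ k := by
    intro k w
    have : mlB (1 - (α * k + γ)) w = mlB (1 - γ) w * exp (-(α * w)) ^ k := by
      unfold mlB
      rw [← Complex.exp_nat_mul, ← Complex.exp_add]; congr 1; push_cast; ring
    rw [this, neg_pow (x : ℂ), neg_pow ((x : ℂ) * _), mul_pow]; ring
  have hq : ∀ w : ℂ, a ≤ w.re → ‖-(x * exp (-(α * w)))‖ ≤ 1 / 2 := by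
    intro w hw
    rw [norm_neg, norm_mul, Complex.norm_exp, Complex.norm_real, Real.norm_of_nonneg hx.le]
    refine le_trans ?_ ha
    have : (-(α * w) : ℂ).re = -(α * w.re) := by simp
    rw [this]; gcongr
  have hs : ∀ w : ℂ, a ≤ w.re → HasSum (fun k : ℕ => (-x : ℂ) ^ k * mlB (1 - (α * k + γ)) w)
      (mlG α γ x w) := by
    intro w hw
    simp only [key]
    have := (hasSum_geometric_of_norm_lt_one (lt_of_le_of_lt (hq w hw) (by norm_num))).mul_left
      (mlB (1 - γ) w)
    rwa [sub_neg_eq_add] at this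
  have hb : ∀ w : ℂ, a ≤ w.re → ∀ k : ℕ, ‖(-x : ℂ) ^ k * mlB (1 - (α * k + γ)) w‖ ≤
      ‖mlB (1 - γ) w‖ * (1 / 2) ^ k := by
    intro w hw k
    rw [key, norm_mul, norm_pow]
    gcongr
    exact hq w hw
  have hsum : ∀ r : ℝ, Summable fun k : ℕ => r * (1 / 2 : ℝ) ^ k := fun r =>
    summable_geometric_two.mul_left r
  have hts : ∀ r : ℝ, ∑' k : ℕ, r * (1 / 2 : ℝ) ^ k = r * 2 := fun r => by
    rw [tsum_mul_left, tsum_geometric_two]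
  have hor : ∀ y : ℝ, Real.cos y < 0 →
      HasSum (fun k : ℕ => (-x : ℂ) ^ k * ∫ u in Ioi a, mlB (1 - (α * k + γ)) ((u : ℂ) + (y : ℂ) * I))
        (∫ u in Ioi a, mlG α γ x ((u : ℂ) + (y : ℂ) * I)) := by
    intro y hy
    simp only [← integral_const_mul]
    refine hasSum_integral_of_dominated_convergence
      (fun k u => ‖mlB (1 - γ) ((u : ℂ) + (y : ℂ) * I)‖ * (1 / 2 : ℝ) ^ k) ?_ ?_ ?_ ?_ ?_
    · exact fun k => ((mlB_integrable _ _ _ hy).const_mul _).aestronglyMeasurable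
    · exact fun k => (ae_restrict_iff' measurableSet_Ioi).2 (Eventually.of_forall fun u hu =>
        hb _ (by simpa using le_of_lt hu) k)
    · exact Eventually.of_forall fun u => hsum _
    · simp only [hts]
      exact ((mlB_integrable _ _ _ hy).norm).mul_const _
    · exact (ae_restrict_iff' measurableSet_Ioi).2 (Eventually.of_forall fun u hu =>
        hs _ (by simpa using le_of_lt hu))
  have hver : HasSum (fun k : ℕ => (-x : ℂ) ^ k *
      ∫ y in (-φ)..φ, mlB (1 - (α * k + γ)) ((a : ℂ) + (y : ℂ) * I))
        (∫ y in (-φ)..φ, mlG α γ x ((a : ℂ) + (y : ℂ) * I)) := by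
    simp only [← intervalIntegral.integral_const_mul]
    refine intervalIntegral.hasSum_integral_of_dominated_convergence
      (fun k y => ‖mlB (1 - γ) ((a : ℂ) + (y : ℂ) * I)‖ * (1 / 2 : ℝ) ^ k) ?_ ?_ ?_ ?_ ?_
    · exact fun k => (continuous_const.mul
        ((mlB_cont _).comp (by fun_prop))).aestronglyMeasurable
    · exact fun k => Eventually.of_forall fun y _ => hb _ (by simp) k
    · exact Eventually.of_forall fun u _ => hsum _
    · simp only [hts]
      exact ((((mlB_cont _).comp (by fun_prop)).norm).mul continuous_const).intervalIntegrable _ _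
    · exact Eventually.of_forall fun y _ => hs _ (by simp)
  have := ((hor φ hc).sub (hor (-φ) (by rwa [Real.cos_neg]))).add (hver.mul_left I)
  unfold mlK
  have e : ∀ (k : ℕ) (A B D : ℂ), (-x : ℂ) ^ k * (A - B + I * D) =
      (-x : ℂ) ^ k * A - (-x : ℂ) ^ k * B + I * ((-x : ℂ) ^ k * D) := by
    intros; ring
  simp only [e]
  exact this

lemma ml_repr (α φ γ x : ℝ) (hα : 0 < α) (h1 : Real.pi / 2 < φ) (h2 : φ ≤ Real.pi)
    (hφ : α * φ < Real.pi) (hγ : 0 < γ) (hx : 0 < x) :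
    ((2 * Real.pi * I : ℂ)) * mittagLeffler α γ (-x) = mlK φ 0 (mlG α γ x) := by
  have hπ := Real.pi_pos
  have h0 : 0 ≤ φ := by linarith
  have hc : Real.cos φ < 0 := Real.cos_neg_of_pi_div_two_lt_of_lt h1 (by linarith)
  obtain ⟨a, ha0, ha⟩ : ∃ a : ℝ, 0 ≤ a ∧ x * Real.exp (-(α * a)) ≤ 1 / 2 := by
    refine ⟨2 * x / α, by positivity, ?_⟩
    rw [show α * (2 * x / α) = 2 * x by field_simp, Real.exp_neg, ← div_eq_mul_inv,
      div_le_div_iff₀ (Real.exp_pos _) two_pos]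
    linarith [Real.add_one_le_exp (2 * x)]
  have hshift : mlK φ 0 (mlG α γ x) = mlK φ a (mlG α γ x) :=
    mlK_shift φ 0 a h0 ha0 _ (fun w _ hw => mlG_diff α φ γ x hα h0 hφ hx w hw)
      (mlG_integrable α φ γ x hα h0 hφ hx φ (by rw [abs_of_nonneg h0]) hc)
      (mlG_integrable α φ γ x hα h0 hφ hx (-φ) (by rw [abs_neg, abs_of_nonneg h0])
        (by rwa [Real.cos_neg]))
  have hS := ml_hasSum α φ γ x a hα h1 h2 hx ha
  rw [hshift, ← hS.tsum_eq]
  unfold mittagLeffler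
  rw [Complex.ofReal_tsum, ← tsum_mul_left]
  congr 1
  ext k
  rw [ml_hankel φ a (α * k + γ) h1 h2 ha0 (by positivity)]
  push_cast
  ring

lemma ml_decay (α γ : ℝ) (hα1 : 1 < α) (hα2 : α < 2) (hγ : 0 < γ) :
    ∃ C > 0, ∀ x : ℝ, 0 < x → |mittagLeffler α γ (-x)| ≤ C * (1 + x)⁻¹ := by
  have hπ := Real.pi_pos
  have hα : 0 < α := by linarith
  set φ := (Real.pi / 2 + Real.pi / α) / 2 with hφd
  have hlt : Real.pi / 2 < Real.pi / α := div_lt_div_of_pos_left hπ hα hα2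
  have hle : Real.pi / α ≤ Real.pi := div_le_self hπ.le hα1.le
  have h1 : Real.pi / 2 < φ := by linarith
  have h2 : φ ≤ Real.pi := by linarith
  have hφ : α * φ < Real.pi := by
    have : φ < Real.pi / α := by linarith
    rw [lt_div_iff₀ hα] at this; linarith
  obtain ⟨C, hC, hb⟩ := mlK_bound α φ γ hα h1 h2 hφ
  refine ⟨C / (2 * Real.pi), by positivity, fun x hx => ?_⟩
  have h := hb x hx
  rw [← ml_repr α φ γ x hα h1 h2 hφ hγ hx] at h
  simp only [norm_mul, norm_I, Complex.norm_real, Complex.norm_ofNat, Real.norm_eq_abs,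
    abs_of_pos hπ, mul_one] at h
  rw [div_mul_eq_mul_div, le_div_iff₀ (by positivity)]
  linarith

/-- Let `α ∈ (1,2)`, `γ > 0` and `β ∈ [0,1]`. Then there exists
`C > 0`, depending only on `α`, `γ` and `β`, such that for all `λ > 0` and `t > 0`:
`λ^β |E_{α,γ}(−λ t^α)| ≤ C t^{−αβ}`. -/
theorem mittagLeffler_weighted_decay (α γ β : ℝ) (hα1 : 1 < α) (hα2 : α < 2)
    (hγ : 0 < γ) (hβ0 : 0 ≤ β) (hβ1 : β ≤ 1) :
    ∃ C > 0, ∀ lam t : ℝ, 0 < lam → 0 < t →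
      lam ^ β * |mittagLeffler α γ (-lam * t ^ α)| ≤ C * t ^ (-(α * β)) := by
  obtain ⟨C, hC, h⟩ := ml_decay α γ hα1 hα2 hγ
  refine ⟨C, hC, fun lam t hl ht => ?_⟩
  have hx : 0 < lam * t ^ α := by positivity
  have hb := h _ hx
  rw [← neg_mul] at hb
  have hp : (lam * t ^ α) ^ β ≤ 1 + lam * t ^ α :=
    calc (lam * t ^ α) ^ β ≤ (1 + lam * t ^ α) ^ β :=
          Real.rpow_le_rpow hx.le (by linarith) hβ0
      _ ≤ (1 + lam * t ^ α) ^ (1 : ℝ) := Real.rpow_le_rpow_of_exponent_le (by linarith) hβ1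
      _ = _ := Real.rpow_one _
  have he : lam ^ β = (lam * t ^ α) ^ β * t ^ (-(α * β)) := by
    rw [Real.mul_rpow hl.le (by positivity), ← Real.rpow_mul ht.le, mul_assoc,
      ← Real.rpow_add ht]
    simp
  rw [he]
  have ht' : 0 < t ^ (-(α * β)) := by positivity
  calc _ ≤ (1 + lam * t ^ α) * t ^ (-(α * β)) * (C * (1 + lam * t ^ α)⁻¹) := by gcongr
    _ = C * t ^ (-(α * β)) := by field_simp
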